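/- Let x ∈ ℝ^D be nonzero, let x̄ ∈ ℝ^D be any vector, and set r = x/‖x‖ − x̄. Suppose q = sign(S r) for a D×D i.i.d. standard Gaussian matrix S independent of everything else. Then for any fixed y ∈ ℝ^D, the TurboQuant estimator ‖x‖·⟨x̄, y⟩ + √(π/2)·(‖x‖·‖r‖/D)·⟨q, S y⟩ has expectation ⟨x, y⟩. -/

import Mathlib

open MeasureTheory ProbabilityTheory

/-- sign(t) = +1 if t ≥ 0, −1 otherwise. -/
noncomputable def qSign (t : ℝ) : ℝ := if 0 ≤ t then 1 else -1


theorem aux_abs (v : NNReal) (hv : v ≠ 0) :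
    ∫ t, |t| ∂(gaussianReal 0 v) = Real.sqrt (2 / Real.pi) * Real.sqrt v := by
  have hv' : (0 : ℝ) < v := by positivity
  rw [integral_gaussianReal_eq_integral_smul hv]
  have h1 : ∀ t : ℝ, gaussianPDFReal 0 v t • |t| =
      (fun s : ℝ => (Real.sqrt (2 * Real.pi * v))⁻¹ *
        (s ^ (1 : ℝ) * Real.exp (-(1 / (2 * v)) * s ^ (2 : ℝ)))) |t| := by
    intro t
    simp only [gaussianPDFReal, smul_eq_mul, sub_zero, Real.rpow_one, Real.rpow_two, sq_abs]
    rw [show -t ^ 2 / (2 * (v : ℝ)) = -(1 / (2 * v)) * t ^ 2 by ring]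
    ring
  simp_rw [h1]
  rw [integral_comp_abs (f := fun s : ℝ => (Real.sqrt (2 * Real.pi * v))⁻¹ *
        (s ^ (1 : ℝ) * Real.exp (-(1 / (2 * v)) * s ^ (2 : ℝ)))), integral_const_mul,
    integral_rpow_mul_exp_neg_mul_rpow (by norm_num) (by norm_num) (by positivity)]
  rw [show (-((1 : ℝ) + 1) / 2) = -1 by norm_num, show ((1 : ℝ) + 1) / 2 = 1 by norm_num,
    Real.Gamma_one, Real.rpow_neg_one]
  have hs : Real.sqrt (2 / Real.pi) * Real.sqrt v * Real.sqrt (2 * Real.pi * v) = 2 * v := by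
    rw [← Real.sqrt_mul (by positivity), ← Real.sqrt_mul (by positivity),
      show 2 / Real.pi * v * (2 * Real.pi * v) = (2 * (v : ℝ)) ^ 2 by field_simp]
    exact Real.sqrt_sq (by positivity)
  have : Real.sqrt (2 * Real.pi * v) ≠ 0 := by positivity
  field_simp
  linarith

theorem qSign_meas : Measurable qSign :=
  Measurable.ite measurableSet_Ici measurable_const measurable_const

theorem qSign_mul (t : ℝ) : qSign t * t = |t| := by
  unfold qSign
  split_ifs with h
  · rw [abs_of_nonneg h, one_mul]
  · rw [abs_of_neg (not_le.mp h)]; ring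

theorem qSign_bd (t : ℝ) : ‖qSign t‖ ≤ 1 := by
  unfold qSign
  split_ifs <;> simp

section
variable {D : ℕ}

theorem aux_eval : ∀ j : Fin D, HasGaussianLaw (fun g : Fin D → ℝ => g j)
    (Measure.pi fun _ : Fin D => gaussianReal 0 1) := fun j => by
  have h : HasLaw (fun g : Fin D → ℝ => g j) (gaussianReal 0 1)
      (Measure.pi fun _ : Fin D => gaussianReal 0 1) :=
    ⟨(measurable_pi_apply j).aemeasurable, (measurePreserving_eval (fun _ : Fin D => gaussianReal 0 1) j).map_eq⟩
  exact h.hasGaussianLaw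

theorem aux_indep : iIndepFun (fun (j : Fin D) (g : Fin D → ℝ) => g j)
    (Measure.pi fun _ : Fin D => gaussianReal 0 1) :=
  iIndepFun_pi (X := fun _ => id) (fun _ => aemeasurable_id)

theorem aux_id : HasGaussianLaw (fun g : Fin D → ℝ => fun j => g j)
    (Measure.pi fun _ : Fin D => gaussianReal 0 1) :=
  aux_indep.hasGaussianLaw aux_eval

/-- linear functional -/
noncomputable def lf (a : Fin D → ℝ) : (Fin D → ℝ) →L[ℝ] ℝ :=
  ∑ j, a j • ContinuousLinearMap.proj (R := ℝ) (φ := fun _ : Fin D => ℝ) j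

theorem lf_apply (a g : Fin D → ℝ) : lf a g = ∑ j, g j * a j := by
  simp [lf, mul_comm]

theorem aux_pair (a b : Fin D → ℝ) :
    HasGaussianLaw (fun g : Fin D → ℝ => (∑ j, g j * a j, ∑ j, g j * b j))
      (Measure.pi fun _ : Fin D => gaussianReal 0 1) := by
  have := (aux_id (D := D)).map_fun ((lf a).prod (lf b))
  simpa [lf_apply] using this

theorem aux_mean (a : Fin D → ℝ) :
    ∫ g : Fin D → ℝ, ∑ j, g j * a j ∂(Measure.pi fun _ : Fin D => gaussianReal 0 1) = 0 := by
  rw [integral_finsetSum _ (fun j _ => (aux_eval j).integrable.mul_const _)]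
  refine Finset.sum_eq_zero fun j _ => ?_
  rw [integral_mul_const, integral_eval]
  simp

theorem aux_cov (a b : Fin D → ℝ) :
    cov[fun g : Fin D → ℝ => ∑ j, g j * a j, fun g => ∑ j, g j * b j;
      Measure.pi fun _ : Fin D => gaussianReal 0 1] = ∑ j, a j * b j := by
  rw [covariance_fun_sum_fun_sum (fun j => by simpa [mul_comm] using (aux_eval j).memLp_two.const_mul (a j))
    (fun j => by simpa [mul_comm] using (aux_eval j).memLp_two.const_mul (b j))]
  refine Finset.sum_congr rfl fun i _ => ?_
  rw [Finset.sum_eq_single i]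
  · rw [covariance_mul_const_left, covariance_mul_const_right,
      covariance_self (measurable_pi_apply i).aemeasurable, ← Function.id_comp (fun g : Fin D → ℝ => g i),
      ← variance_map aemeasurable_id (measurable_pi_apply i).aemeasurable,
      (measurePreserving_eval (fun _ : Fin D => gaussianReal 0 1) i).map_eq]
    simp [mul_comm]
  · intro j _ hj
    rw [covariance_mul_const_left, covariance_mul_const_right,
      (aux_indep.indepFun hj.symm).covariance_eq_zero (aux_eval i).memLp_two
        (aux_eval j).memLp_two]
    simp
  · simp

theorem aux_int (a b : Fin D → ℝ) :
    Integrable (fun g : Fin D → ℝ => qSign (∑ j, g j * a j) * ∑ j, g j * b j)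
      (Measure.pi fun _ : Fin D => gaussianReal 0 1) := by
  refine (aux_pair a b).snd.integrable.bdd_mul (c := 1) ?_ ?_
  · exact (qSign_meas.comp (by fun_prop)).aestronglyMeasurable
  · exact Filter.Eventually.of_forall fun g => qSign_bd _

theorem aux_row (r y : Fin D → ℝ) (hr0 : r ≠ 0) :
    ∫ g : Fin D → ℝ, qSign (∑ j, g j * r j) * ∑ j, g j * y j
      ∂(Measure.pi fun _ : Fin D => gaussianReal 0 1) =
    Real.sqrt (2 / Real.pi) * (∑ j, r j * y j) / Real.sqrt (∑ j, r j ^ 2) := by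
  have hpos : 0 < ∑ j, r j ^ 2 := by
    obtain ⟨j, hj⟩ := Function.ne_iff.mp hr0
    exact Finset.sum_pos' (fun i _ => sq_nonneg _)
      ⟨j, Finset.mem_univ _, by have : r j ≠ 0 := hj; positivity⟩
  set V := ∑ j, r j ^ 2 with hV
  set c := (∑ j, r j * y j) / V with hc
  set z : Fin D → ℝ := fun j => y j - c * r j with hz
  have hrz : ∑ j, r j * z j = 0 := by
    have : ∀ j, r j * z j = r j * y j - c * r j ^ 2 := fun j => by simp only [hz]; ring
    simp_rw [this]
    rw [Finset.sum_sub_distrib, ← Finset.mul_sum, ← hV, hc]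
    field_simp
    simp
  have hsplit : ∀ g : Fin D → ℝ, qSign (∑ j, g j * r j) * ∑ j, g j * y j =
      c * |∑ j, g j * r j| + qSign (∑ j, g j * r j) * ∑ j, g j * z j := by
    intro g
    rw [← qSign_mul]
    have : ∑ j, g j * y j = c * (∑ j, g j * r j) + ∑ j, g j * z j := by
      rw [Finset.mul_sum, ← Finset.sum_add_distrib]
      refine Finset.sum_congr rfl fun j _ => ?_
      simp only [hz]; ring
    rw [this]; ring
  have hG := (aux_pair r z).fst
  have hlaw : (Measure.pi fun _ : Fin D => gaussianReal 0 1).map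
      (fun g : Fin D → ℝ => ∑ j, g j * r j) = gaussianReal 0 V.toNNReal := by
    rw [hG.map_eq_gaussianReal, aux_mean, ← covariance_self hG.aemeasurable, aux_cov]
    simp [hV, pow_two]
  have habs : ∫ g : Fin D → ℝ, |∑ j, g j * r j|
      ∂(Measure.pi fun _ : Fin D => gaussianReal 0 1) =
      Real.sqrt (2 / Real.pi) * Real.sqrt V := by
    have := integral_map (μ := Measure.pi fun _ : Fin D => gaussianReal 0 1)
      (φ := fun g : Fin D → ℝ => ∑ j, g j * r j) hG.aemeasurable (f := fun t : ℝ => |t|)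
      (by fun_prop)
    rw [← this, hlaw, aux_abs _ (by simpa using hpos), Real.coe_toNNReal _ hpos.le]
  have hind : IndepFun (fun g : Fin D → ℝ => ∑ j, g j * r j) (fun g => ∑ j, g j * z j)
      (Measure.pi fun _ : Fin D => gaussianReal 0 1) :=
    (aux_pair r z).indepFun_of_covariance_eq_zero (by rw [aux_cov, hrz])
  have hzero : ∫ g : Fin D → ℝ, qSign (∑ j, g j * r j) * ∑ j, g j * z j
      ∂(Measure.pi fun _ : Fin D => gaussianReal 0 1) = 0 := by
    have := (hind.comp qSign_meas measurable_id).integral_fun_mul_eq_mul_integral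
      (qSign_meas.comp (by fun_prop)).aestronglyMeasurable
      (by simpa using (aux_pair r z).snd.aemeasurable.aestronglyMeasurable)
    simp only [Function.comp_apply, id] at this
    rw [this, aux_mean, mul_zero]
  simp_rw [hsplit]
  rw [integral_add (hG.integrable.abs.const_mul c) (aux_int r z), integral_const_mul, habs, hzero,
    hc]
  have h2 : Real.sqrt V * Real.sqrt V = V := Real.mul_self_sqrt hpos.le
  have h3 : Real.sqrt V ≠ 0 := by positivity
  field_simp
  linear_combination (∑ j, r j * y j) * Real.sqrt (2 / Real.pi) * h2

end

/-- TurboQuant's full inner-product estimator is unbiased: with r = x/‖x‖ − x̄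
nonzero and q = sign(S r) for an i.i.d. Gaussian matrix S,
E[‖x‖·⟨x̄, y⟩ + √(π/2)·(‖x‖·‖r‖/D)·⟨q, S y⟩] = ⟨x, y⟩. -/
theorem stmt_9 (D : ℕ) (x xbar y r : Fin D → ℝ) (hx : x ≠ 0)
    (hr : r = fun j => x j / Real.sqrt (∑ k, x k ^ 2) - xbar j) (hr0 : r ≠ 0) :
    (∫ S : Fin D → Fin D → ℝ,
        (Real.sqrt (∑ k, x k ^ 2) * ∑ j, xbar j * y j +
          Real.sqrt (Real.pi / 2) *
            (Real.sqrt (∑ k, x k ^ 2) * Real.sqrt (∑ j, r j ^ 2) / D) *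
            ∑ i, qSign (∑ j, S i j * r j) * (∑ j, S i j * y j))
        ∂(Measure.pi fun _ : Fin D => Measure.pi fun _ : Fin D => gaussianReal 0 1)) =
      ∑ j, x j * y j := by
  have hD : (D : ℝ) ≠ 0 := by
    rintro h
    have : D = 0 := by exact_mod_cast h
    subst this
    exact hr0 (Subsingleton.elim _ _)
  have hpos : ∀ w : Fin D → ℝ, w ≠ 0 → Real.sqrt (∑ j, w j ^ 2) ≠ 0 := by
    intro w hw
    obtain ⟨j, hj⟩ := Function.ne_iff.mp hw
    have : 0 < ∑ j, w j ^ 2 := Finset.sum_pos' (fun i _ => sq_nonneg _)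
      ⟨j, Finset.mem_univ _, by have : w j ≠ 0 := hj; positivity⟩
    positivity
  have hnx := hpos x hx
  have hnr := hpos r hr0
  have hi : ∀ i : Fin D, Integrable (fun S : Fin D → Fin D → ℝ =>
      qSign (∑ j, S i j * r j) * (∑ j, S i j * y j))
      (Measure.pi fun _ : Fin D => Measure.pi fun _ : Fin D => gaussianReal 0 1) := fun i =>
    integrable_comp_eval (μ := fun _ : Fin D => Measure.pi fun _ : Fin D => gaussianReal 0 1)
      (aux_int r y)
  have he : ∀ i : Fin D, ∫ S : Fin D → Fin D → ℝ,
      qSign (∑ j, S i j * r j) * (∑ j, S i j * y j)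
      ∂(Measure.pi fun _ : Fin D => Measure.pi fun _ : Fin D => gaussianReal 0 1) =
      Real.sqrt (2 / Real.pi) * (∑ j, r j * y j) / Real.sqrt (∑ j, r j ^ 2) := fun i => by
    rw [← aux_row r y hr0]
    exact integral_comp_eval
      (μ := fun _ : Fin D => Measure.pi fun _ : Fin D => gaussianReal 0 1)
      (aux_int r y).aestronglyMeasurable
  rw [integral_add (integrable_const _) ((integrable_finsetSum _ fun i _ => hi i).const_mul _),
    integral_const, integral_const_mul, integral_finsetSum _ fun i _ => hi i]
  simp_rw [he]
  have hs : Real.sqrt (Real.pi / 2) * Real.sqrt (2 / Real.pi) = 1 := by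
    have := Real.pi_pos
    rw [← Real.sqrt_mul (by positivity)]
    field_simp
    simp
  have hry : ∑ j, r j * y j =
      (∑ j, x j * y j) / Real.sqrt (∑ k, x k ^ 2) - ∑ j, xbar j * y j := by
    rw [Finset.sum_div, ← Finset.sum_sub_distrib]
    refine Finset.sum_congr rfl fun j _ => ?_
    rw [hr]; ring
  simp only [probReal_univ, one_smul, Finset.sum_const, Finset.card_univ,
    Fintype.card_fin, nsmul_eq_mul]
  generalize Real.sqrt (∑ j, r j ^ 2) = R at *
  generalize Real.sqrt (∑ j, x j ^ 2) = N at *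
  have : Real.sqrt (Real.pi / 2) * (N * R / D) *
      (D * (Real.sqrt (2 / Real.pi) * (∑ j, r j * y j) / R)) =
      (Real.sqrt (Real.pi / 2) * Real.sqrt (2 / Real.pi)) * (N * ∑ j, r j * y j) := by
    field_simp
  rw [this, hs, hry]
  field_simp
  ring
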